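/- arXiv:2310.16475 — 3 statements merged into one kernel-verified Lean document; each statement's English description precedes it below -/
import Mathlib

section
/- Let s, t, t' be real numbers with s > 0, t > 0 and t' ≥ 0, let n1, n2, n3 be positive integers and n4 a nonnegative integer. Then it is impossible that both n2·(s + t') − n3·n2·t + s·n4 ≤ 0 and n3·(s + t·n1) + (n4 + n2)·s − t'·n1 ≤ 0 hold; equivalently, n2·(s + t') − n3·n2·t + s·n4 > 0 or n3·(s + t·n1) + (n4 + n2)·s − t'·n1 > 0. -/
/-! In the combination `n1 * (T1 − T2) + n2 * (T1 − T3)` every occurrence of `t` and `t'` cancels.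
What remains is a positive multiple of the setup time, so the two differences cannot both be
nonpositive. -/

theorem pos_or_pos_of_weighted_sum_pos {R : Type*} [Semiring R] [LinearOrder R] [IsOrderedRing R]
    {a b x y : R} (ha : 0 ≤ a) (hb : 0 ≤ b) (h : 0 < a * x + b * y) : 0 < x ∨ 0 < y := by
  contrapose! h
  exact add_nonpos (mul_nonpos_of_nonneg_of_nonpos ha h.1) (mul_nonpos_of_nonneg_of_nonpos hb h.2)

theorem weighted_sum_of_gains_eq_setup_mul {R : Type*} [CommRing R] (s t t' n1 n2 n3 n4 : R) :
    n1 * (n2 * (s + t') - n3 * n2 * t + s * n4) +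
        n2 * (n3 * (s + t * n1) + (n4 + n2) * s - t' * n1) =
      s * (n1 * (n2 + n4) + n2 * (n2 + n3 + n4)) := by
  ring

theorem stmt_2_general {R : Type*} [CommRing R] [LinearOrder R] [IsStrictOrderedRing R]
    {s n1 n2 n3 n4 : R} (t t' : R) (hs : 0 < s)
    (hn1 : 0 ≤ n1) (hn2 : 0 < n2) (hn3 : 0 ≤ n3) (hn4 : 0 ≤ n4) :
    0 < n2 * (s + t') - n3 * n2 * t + s * n4 ∨
      0 < n3 * (s + t * n1) + (n4 + n2) * s - t' * n1 := by
  refine pos_or_pos_of_weighted_sum_pos hn1 hn2.le ?_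
  rw [weighted_sum_of_gains_eq_setup_mul]
  positivity

/-- The contradiction at the heart of the contiguity proof for optimal SSFS schedules:
at least one of the two rearrangements strictly decreases the total response time, i.e.
`T1 − T2 > 0` or `T1 − T3 > 0`. -/
theorem stmt_2 (s t t' : ℝ) (hs : 0 < s) (ht : 0 < t) (ht' : 0 ≤ t')
    (n1 n2 n3 : ℕ) (hn1 : 0 < n1) (hn2 : 0 < n2) (hn3 : 0 < n3) (n4 : ℕ) :
    (n2 : ℝ) * (s + t') - (n3 : ℝ) * n2 * t + s * n4 > 0 ∨
      (n3 : ℝ) * (s + t * n1) + ((n4 : ℝ) + n2) * s - t' * n1 > 0 :=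
  stmt_2_general t t' hs n1.cast_nonneg (Nat.cast_pos.2 hn2) n3.cast_nonneg n4.cast_nonneg
end

section
/- Define the cost of a finite list L of pairs of real numbers by C(L) = Σ over all ordered index pairs i < k of (first component of L_k)·(second component of L_i). Then for any lists P and Q and any pairs a = (n_a, D_a) and b = (n_b, D_b), C(P ++ [a, b] ++ Q) − C(P ++ [b, a] ++ Q) = n_b·D_a − n_a·D_b. -/
open Finset in
/-- Order-dependent part of the total response time of a block schedule:
`C(L) = Σ_{i<k} (L_k).1 · (L_i).2`. -/
noncomputable def pairCost (L : List (ℝ × ℝ)) : ℝ :=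
  ∑ k ∈ Finset.range L.length, ∑ i ∈ Finset.range k,
    (L.getD k (0, 0)).1 * (L.getD i (0, 0)).2

theorem sum_range_length_getD {α M : Type*} [AddCommMonoid M] (L : List α) (d : α) (f : α → M) :
    ∑ k ∈ Finset.range L.length, f (L.getD k d) = (L.map f).sum := by
  simp [Finset.sum_range]

theorem pairCost_cons (a : ℝ × ℝ) (L : List (ℝ × ℝ)) :
    pairCost (a :: L) = pairCost L + (L.map Prod.fst).sum * a.2 := by
  rw [← sum_range_length_getD L (0, 0), Finset.sum_mul, pairCost, pairCost,
    ← Finset.sum_add_distrib, List.length_cons, Finset.sum_range_succ']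
  simp only [Finset.sum_range_succ', Finset.sum_range_zero, List.getD_cons_succ,
    List.getD_cons_zero, add_zero]

theorem pairCost_append (L M : List (ℝ × ℝ)) :
    pairCost (L ++ M) =
      pairCost L + pairCost M + (M.map Prod.fst).sum * (L.map Prod.snd).sum := by
  induction L with
  | nil => simp [pairCost]
  | cons a L ih =>
    simp only [List.cons_append, pairCost_cons, ih, List.map_append, List.sum_append,
      List.map_cons, List.sum_cons]
    ring

theorem pairCost_pair (a b : ℝ × ℝ) : pairCost [a, b] = b.1 * a.2 := by
  simp [pairCost, Finset.sum_range_succ]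

/-- A segment interacts with its surroundings only through its two component sums. -/
theorem pairCost_append_append_sub_of_perm {A B : List (ℝ × ℝ)} (h : A.Perm B)
    (P Q : List (ℝ × ℝ)) :
    pairCost (P ++ A ++ Q) - pairCost (P ++ B ++ Q) = pairCost A - pairCost B := by
  have fst_sum_eq : (A.map Prod.fst).sum = (B.map Prod.fst).sum := (h.map _).sum_eq
  have snd_sum_eq : (A.map Prod.snd).sum = (B.map Prod.snd).sum := (h.map _).sum_eq
  simp only [pairCost_append, List.map_append, List.sum_append, fst_sum_eq, snd_sum_eq]
  ring

/-- Swapping two adjacent blocks `a = (n_a, D_a)` and `b = (n_b, D_b)` changes the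
cost by exactly `n_b·D_a − n_a·D_b`, independently of the surrounding lists. -/
theorem stmt_5 (P Q : List (ℝ × ℝ)) (na Da nb Db : ℝ) :
    pairCost (P ++ [(na, Da), (nb, Db)] ++ Q) - pairCost (P ++ [(nb, Db), (na, Da)] ++ Q)
      = nb * Da - na * Db := by
  rw [pairCost_append_append_sub_of_perm (List.Perm.swap _ _ _), pairCost_pair, pairCost_pair]
end

section
/- Consider a schedule given by a finite list l over labels {1,…,m} in which label j occurs exactly n_j ≥ 1 times; each item with label j has processing duration t_j > 0, and additionally a setup time s_j > 0 is incurred by every item that starts a new run of its label (i.e., the item is first in the list or its label differs from the preceding item's label); the completion time of the k-th item is the sum of the durations (including setups) of items 1 through k, and the total response time T(l) is the sum of the completion times of all items. If l minimizes T among all lists with the same label multiset (n_j occurrences of each label j), then for every label j the occurrences of j in l are contiguous (they form a single run). -/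
/-- Durations of the items of a schedule (a list of labels): an item of label `j` takes
time `t j`, plus its setup time `s j` whenever it starts a new run of its label, i.e. the
previous item (tracked by `prev`, initially `none`) does not have the same label. -/
def durList {m : ℕ} (t s : Fin m → ℝ) : Option (Fin m) → List (Fin m) → List ℝ
  | _, [] => []
  | prev, a :: rest => (t a + if prev = some a then 0 else s a) :: durList t s (some a) rest

/-- Sum of the completion times of all items, given the list of item durations:
the `k`-th completion time is the sum of durations of items `1..k`, so each duration
is counted once for itself and once for every later item. -/
def sumCompletions : List ℝ → ℝ
  | [] => 0
  | x :: xs => x * (xs.length + 1) + sumCompletions xs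

/-- Total response time `T(l)` of a schedule `l`: sum of the completion times of all items. -/
def totalResponse {m : ℕ} (t s : Fin m → ℝ) (l : List (Fin m)) : ℝ :=
  sumCompletions (durList t s none l)

/-!
Suppose an optimal schedule is `p ++ jᵃ ++ mid ++ j :: q`, where `jᵃ` is the first run of `j` and
the nonempty list `mid` avoids `j`. Let `D` be the total duration of `mid` in this schedule.
Pulling the second `j` forward into the run saves its setup time and must not pay off, so
`D + s j ≤ t j * |mid|`. Postponing the run `jᵃ` until after `mid` must not pay off either, so
`t j * |mid| ≤ D`. The two inequalities contradict `0 < s j`.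
-/

section Lists

variable {α : Type*}

lemma getLast?_or_ne_some_of_notMem {j : α} {prev : Option α} {l : List α} (hprev : prev ≠ some j)
    (hl : j ∉ l) : l.getLast?.or prev ≠ some j := by
  rw [Ne, Option.or_eq_some_iff]
  rintro (hlast | ⟨-, h⟩)
  · exact hl (List.mem_of_getLast? hlast)
  · exact hprev h

lemma exists_eq_replicate_append (j : α) (l : List α) :
    ∃ (a : ℕ) (r : List α), l = List.replicate a j ++ r ∧ r.head? ≠ some j := by
  induction l with
  | nil => exact ⟨0, [], rfl, by simp⟩
  | cons b l ih =>
    by_cases hb : b = j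
    · obtain ⟨a, r, rfl, hr⟩ := ih
      exact ⟨a + 1, r, by rw [hb, List.replicate_succ, List.cons_append], hr⟩
    · exact ⟨0, b :: l, rfl, by simpa using hb⟩

lemma eq_append_replicate_count_append_or_exists_gap [DecidableEq α] (j : α) (l : List α) :
    (∃ p q, l = p ++ List.replicate (l.count j) j ++ q ∧ j ∉ p ∧ j ∉ q) ∨
      ∃ p a mid q, l = p ++ (List.replicate a j ++ (mid ++ j :: q)) ∧
        a ≠ 0 ∧ mid ≠ [] ∧ j ∉ p ∧ j ∉ mid := by
  by_cases hl : j ∈ l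
  · obtain ⟨p, rest, rfl, hp⟩ := List.eq_append_cons_of_mem hl
    obtain ⟨a, r, rfl, hr⟩ := exists_eq_replicate_append j rest
    by_cases hjr : j ∈ r
    · obtain ⟨mid, q, rfl, hmid⟩ := List.eq_append_cons_of_mem hjr
      refine .inr ⟨p, a + 1, mid, q, by simp [List.replicate_succ], a.succ_ne_zero, ?_, hp, hmid⟩
      rintro rfl
      simp at hr
    · refine .inl ⟨p, r, ?_, hp, hjr⟩
      simp [List.count_eq_zero_of_not_mem hp, List.count_eq_zero_of_not_mem hjr,
        List.replicate_succ]
  · exact .inl ⟨l, [], by simp [List.count_eq_zero_of_not_mem hl], hl, List.not_mem_nil⟩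

end Lists

section SumCompletions

lemma sumCompletions_append (x y : List ℝ) :
    sumCompletions (x ++ y) = sumCompletions x + x.sum * y.length + sumCompletions y := by
  induction x with
  | nil => simp [sumCompletions]
  | cons a x ih =>
    simp only [List.cons_append, sumCompletions, ih, List.length_append, List.sum_cons]
    push_cast
    ring

lemma sumCompletions_append_append_comm (x y z : List ℝ) :
    sumCompletions (x ++ (y ++ z)) + y.sum * x.length =
      sumCompletions (y ++ (x ++ z)) + x.sum * y.length := by
  simp only [sumCompletions_append, List.length_append]
  push_cast
  ring

lemma sumCompletions_le_of_forall₂_le {x y : List ℝ} (h : List.Forall₂ (· ≤ ·) x y) :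
    sumCompletions x ≤ sumCompletions y := by
  induction h with
  | nil => exact le_rfl
  | cons hab h ih =>
    simp only [sumCompletions, h.length_eq]
    gcongr

end SumCompletions

section Durations

variable {m : ℕ} (t s : Fin m → ℝ)

@[simp]
lemma length_durList (prev : Option (Fin m)) (l : List (Fin m)) :
    (durList t s prev l).length = l.length := by
  induction l generalizing prev with
  | nil => rfl
  | cons a l ih => simp [durList, ih]

lemma durList_append (prev : Option (Fin m)) (x y : List (Fin m)) :
    durList t s prev (x ++ y) = durList t s prev x ++ durList t s (x.getLast?.or prev) y := by
  induction x generalizing prev with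
  | nil => simp [durList]
  | cons a x ih => cases h : x.getLast? <;> simp [durList, ih, List.getLast?_cons, h]

lemma durList_some_replicate (j : Fin m) (a : ℕ) :
    durList t s (some j) (List.replicate a j) = List.replicate a (t j) := by
  induction a with
  | zero => rfl
  | succ a ih => simp [List.replicate_succ, durList, ih]

lemma sum_durList_none_replicate (j : Fin m) {a : ℕ} (ha : a ≠ 0) :
    (durList t s none (List.replicate a j)).sum = a * t j + s j := by
  obtain ⟨b, rfl⟩ := Nat.exists_eq_succ_of_ne_zero ha
  simp only [List.replicate_succ, durList, reduceCtorEq, if_false, durList_some_replicate,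
    List.sum_cons, List.sum_replicate, nsmul_eq_mul]
  push_cast
  ring

lemma durList_eq_durList_none {prev : Option (Fin m)} {l : List (Fin m)} (h : prev ≠ l.head?) :
    durList t s prev l = durList t s none l := by
  cases l with
  | nil => rfl
  | cons a l => simp_all [durList]

lemma durList_some_of_notMem {j : Fin m} {l : List (Fin m)} (h : j ∉ l) :
    durList t s (some j) l = durList t s none l :=
  durList_eq_durList_none t s fun hhead => h (List.mem_of_head? hhead.symm)

lemma durList_replicate_append {j : Fin m} {prev : Option (Fin m)} (hprev : prev ≠ some j)
    {a : ℕ} (ha : a ≠ 0) (x : List (Fin m)) :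
    durList t s prev (List.replicate a j ++ x) =
      durList t s none (List.replicate a j) ++ durList t s (some j) x := by
  have head_ne : prev ≠ (List.replicate a j).head? := by simpa [List.head?_replicate, ha]
  rw [durList_append, durList_eq_durList_none t s head_ne]
  simp [List.getLast?_replicate, ha]

variable {t s}

lemma forall₂_durList_le_durList_none (hs : ∀ i, 0 ≤ s i) (prev : Option (Fin m))
    (l : List (Fin m)) : List.Forall₂ (· ≤ ·) (durList t s prev l) (durList t s none l) := by
  cases l with
  | nil => exact .nil
  | cons a l =>
    refine .cons ?_ (List.forall₂_refl _)
    split_ifs <;> simp_all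

lemma sumCompletions_durList_none_le {j : Fin m} (hj : 0 ≤ s j) (l : List (Fin m)) :
    sumCompletions (durList t s none l) ≤
      sumCompletions (durList t s (some j) l) + s j * l.length := by
  cases l with
  | nil => simp [durList]
  | cons a l =>
    have head_le : t a + s a ≤ (t a + if some j = some a then 0 else s a) + s j := by
      split_ifs with h
      · simp [Option.some.inj h]
      · linarith
    have scaled := mul_le_mul_of_nonneg_right head_le (by positivity : (0 : ℝ) ≤ l.length + 1)
    simp only [durList, sumCompletions, length_durList, List.length_cons, reduceCtorEq, if_false]
    push_cast
    linarith

lemma totalResponse_append_le_append_iff (p : List (Fin m)) {x y : List (Fin m)}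
    (h : x.length = y.length) :
    totalResponse t s (p ++ x) ≤ totalResponse t s (p ++ y) ↔
      sumCompletions (durList t s p.getLast? x) ≤ sumCompletions (durList t s p.getLast? y) := by
  simp [totalResponse, durList_append, sumCompletions_append, h]

end Durations

section Exchange

variable {m : ℕ} {t s : Fin m → ℝ} {j : Fin m} {mid : List (Fin m)}

lemma sumCompletions_pull_forward_le (hs : ∀ i, 0 ≤ s i) (hmid : j ∉ mid) (hne : mid ≠ [])
    (q : List (Fin m)) :
    sumCompletions (durList t s (some j) (j :: (mid ++ q))) +
        ((durList t s none mid).sum + s j) ≤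
      sumCompletions (durList t s (some j) (mid ++ j :: q)) + t j * mid.length := by
  have last_ne : mid.getLast?.or (some j) ≠ some j := by
    rw [Option.or_of_isSome (List.getLast?_isSome.2 hne)]
    exact fun h => hmid (List.mem_of_getLast? h)
  have tail_le : sumCompletions (durList t s (mid.getLast?.or (some j)) q) ≤
      sumCompletions (durList t s (some j) q) + s j * q.length :=
    (sumCompletions_le_of_forall₂_le (forall₂_durList_le_durList_none hs _ q)).trans
      (sumCompletions_durList_none_le (hs j) q)
  simp only [durList, durList_append, durList_some_of_notMem t s hmid, last_ne, if_true, if_false,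
    sumCompletions, sumCompletions_append, length_durList, List.length_append, List.length_cons]
  push_cast
  linarith

lemma forall₂_durList_postponed_run_le (hs : ∀ i, 0 ≤ s i) {prev : Option (Fin m)}
    (hprev : prev ≠ some j) {a : ℕ} (ha : a ≠ 0) (hmid : j ∉ mid) (q : List (Fin m)) :
    List.Forall₂ (· ≤ ·) (durList t s prev (mid ++ (List.replicate a j ++ j :: q)))
      (durList t s none mid ++
        (durList t s none (List.replicate a j) ++ t j :: durList t s (some j) q)) := by
  rw [durList_append, durList_replicate_append t s (getLast?_or_ne_some_of_notMem hprev hmid) ha]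
  simp only [durList, if_true, add_zero]
  exact List.rel_append (forall₂_durList_le_durList_none hs prev mid) (List.forall₂_refl _)

lemma forall₂_le_durList_run_append (hs : 0 ≤ s j) {prev : Option (Fin m)}
    (hprev : prev ≠ some j) {a : ℕ} (ha : a ≠ 0) (hmid : j ∉ mid) (q : List (Fin m)) :
    List.Forall₂ (· ≤ ·)
      (durList t s none (List.replicate a j) ++
        (durList t s none mid ++ t j :: durList t s (some j) q))
      (durList t s prev (List.replicate a j ++ (mid ++ j :: q))) := by
  rw [durList_replicate_append t s hprev ha, durList_append, durList_some_of_notMem t s hmid]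
  refine List.rel_append (List.forall₂_refl _) (List.rel_append (List.forall₂_refl _) ?_)
  exact .cons (by split_ifs <;> simp [hs]) (List.forall₂_refl _)

lemma sumCompletions_postpone_run_le (hs : ∀ i, 0 ≤ s i) {prev : Option (Fin m)}
    (hprev : prev ≠ some j) {a : ℕ} (ha : a ≠ 0) (hmid : j ∉ mid) (q : List (Fin m)) :
    sumCompletions (durList t s prev (mid ++ (List.replicate a j ++ j :: q))) +
        a * (t j * mid.length) ≤
      sumCompletions (durList t s prev (List.replicate a j ++ (mid ++ j :: q))) +
        a * (durList t s none mid).sum := by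
  have postponed_le := sumCompletions_le_of_forall₂_le
    (forall₂_durList_postponed_run_le (t := t) hs hprev ha hmid q)
  have le_original := sumCompletions_le_of_forall₂_le
    (forall₂_le_durList_run_append (t := t) (hs j) hprev ha hmid q)
  have swap := sumCompletions_append_append_comm (durList t s none mid)
    (durList t s none (List.replicate a j)) (t j :: durList t s (some j) q)
  rw [sum_durList_none_replicate t s j ha, length_durList, length_durList,
    List.length_replicate] at swap
  have setup_nonneg : 0 ≤ s j * mid.length := mul_nonneg (hs j) (Nat.cast_nonneg _)
  linarith

end Exchange

theorem stmt_9_general {m : ℕ} (t s : Fin m → ℝ) (hs : ∀ i, 0 ≤ s i) {j : Fin m} (hj : 0 < s j)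
    {l : List (Fin m)}
    (hopt : ∀ l' : List (Fin m), l'.Perm l → totalResponse t s l ≤ totalResponse t s l') :
    ∃ p q : List (Fin m), l = p ++ List.replicate (l.count j) j ++ q ∧ j ∉ p ∧ j ∉ q := by
  refine (eq_append_replicate_count_append_or_exists_gap j l).resolve_right ?_
  rintro ⟨p, a, mid, q, rfl, ha, hmid_ne, hp, hmid⟩
  have run_last : (p ++ List.replicate a j).getLast? = some j := by
    simp [List.getLast?_append, List.getLast?_replicate, ha]
  have pull_forward : (durList t s none mid).sum + s j ≤ t j * mid.length := by
    have perm : (mid ++ j :: q).Perm (j :: (mid ++ q)) := List.perm_middle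
    have opt := hopt _ ((perm.symm.append_left (List.replicate a j)).append_left p)
    rw [← List.append_assoc p, ← List.append_assoc p,
      totalResponse_append_le_append_iff _ perm.length_eq, run_last] at opt
    linarith [sumCompletions_pull_forward_le (t := t) hs hmid hmid_ne q]
  have postpone_run : t j * mid.length ≤ (durList t s none mid).sum := by
    have perm := List.perm_append_comm_assoc mid (List.replicate a j) (j :: q)
    have opt := hopt _ (perm.append_left p)
    rw [totalResponse_append_le_append_iff _ perm.symm.length_eq] at opt
    have p_last : p.getLast? ≠ some j := fun h => hp (List.mem_of_getLast? h)
    have gain := sumCompletions_postpone_run_le (t := t) hs p_last ha hmid q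
    exact le_of_mul_le_mul_left (by linarith) (by positivity : (0 : ℝ) < a)
  linarith

/-- First part of the SSFS optimality theorem: in a schedule minimizing the total
response time among all schedules with the same label multiset (`n j` items of each
label `j`), the occurrences of every label are contiguous. -/
theorem stmt_9 {m : ℕ} (t s : Fin m → ℝ) (n : Fin m → ℕ)
    (ht : ∀ j, 0 < t j) (hs : ∀ j, 0 < s j) (hn : ∀ j, 1 ≤ n j)
    (l : List (Fin m)) (hcount : ∀ j, l.count j = n j)
    (hopt : ∀ l' : List (Fin m), (∀ j, l'.count j = n j) →
      totalResponse t s l ≤ totalResponse t s l') :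
    ∀ j : Fin m, ∃ p q : List (Fin m),
      l = p ++ List.replicate (n j) j ++ q ∧ j ∉ p ∧ j ∉ q := by
  intro j
  simpa only [hcount] using stmt_9_general t s (fun i => (hs i).le) (hs j)
    fun l' hl' => hopt l' fun i => (hl'.count_eq i).trans (hcount i)
end
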